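/- arXiv:1905.07145 — 2 statements merged into one kernel-verified Lean document; each statement's English description precedes it below -/
import Mathlib

section
/- Let β > 0 and define p_0 := 0 and, for t = 1,…,T: p_t := 1 if Δ(t) = 0; p_t := 0 if Δ(t) = −β; otherwise, if Δ(t) ≥ Δ(t−1) then p_t := p_{t−1} + (1 − p_{t−1})·(1 − Δ(t)/Δ(t−1)), and if Δ(t) < Δ(t−1) then p_t := p_{t−1}·(β + Δ(t))/(β + Δ(t−1)). Then p_t = (β + Δ(t))/β for all t = 0,1,…,T. (These p_t are the marginal probabilities Pr[s_t = 1] of the randomized algorithm gCHASE_s^r, so its state distribution coincides with the trajectory of cCHASE.) -/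
/-- The cumulative cost difference `Δ(t)`, with `Δ(0) = −β` and
`Δ(t) = min{0, max{−β, Δ(t−1) + (g_t(0) − g_t(1))}}`. -/
noncomputable def Δfun (β : ℝ) (g0 g1 : ℕ → ℝ) : ℕ → ℝ
  | 0 => -β
  | t + 1 => min 0 (max (-β) (Δfun β g0 g1 t + (g0 (t + 1) - g1 (t + 1))))

/-- The marginal probabilities `p_t = Pr[s_t = 1]` of the randomized online
algorithm gCHASE_s^r: `p_0 = 0`; `p_t = 1` if `Δ(t) = 0`; `p_t = 0` if
`Δ(t) = −β`; otherwise `p_t = p_{t−1} + (1 − p_{t−1})·(1 − Δ(t)/Δ(t−1))` if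
`Δ(t−1) ≤ Δ(t)`, and `p_t = p_{t−1}·(β + Δ(t))/(β + Δ(t−1))` if
`Δ(t) < Δ(t−1)`. -/
noncomputable def pRec (β : ℝ) (g0 g1 : ℕ → ℝ) : ℕ → ℝ
  | 0 => 0
  | t + 1 =>
      if Δfun β g0 g1 (t + 1) = 0 then 1
      else if Δfun β g0 g1 (t + 1) = -β then 0
      else if Δfun β g0 g1 t ≤ Δfun β g0 g1 (t + 1) then
        pRec β g0 g1 t
          + (1 - pRec β g0 g1 t) * (1 - Δfun β g0 g1 (t + 1) / Δfun β g0 g1 t)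
      else
        pRec β g0 g1 t * (β + Δfun β g0 g1 (t + 1)) / (β + Δfun β g0 g1 t)

/-!
Except where `Δ` stays at `-β`, so that `p` stays at `0`, a rise of `Δ` multiplies `1 - p` by
`Δ(t)/Δ(t-1)` and a fall multiplies `p` by `(β + Δ(t))/(β + Δ(t-1))`, the boundary rules included.
The claim `p = (β + Δ)/β`, equivalently `1 - p = -Δ/β`, says that `p` is proportional to `β + Δ`
and `1 - p` to `Δ`, so each rescaling preserves it.
-/

section

variable {β : ℝ} (g0 g1 : ℕ → ℝ)

theorem Δfun_mem_Icc (hβ : 0 ≤ β) (t : ℕ) : Δfun β g0 g1 t ∈ Set.Icc (-β) 0 := by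
  have hneg : -β ≤ 0 := neg_nonpos.mpr hβ
  cases t with
  | zero => exact ⟨le_rfl, hneg⟩
  | succ t => exact ⟨le_min hneg (le_max_left _ _), min_le_left _ _⟩

variable {g0 g1} {t : ℕ}

theorem pRec_succ_of_Δfun_eq_neg (hβ : β ≠ 0) (hbot : Δfun β g0 g1 (t + 1) = -β) :
    pRec β g0 g1 (t + 1) = 0 := by
  rw [pRec, if_neg (hbot.trans_ne (neg_ne_zero.mpr hβ)), if_pos hbot]

theorem one_sub_pRec_succ_of_Δfun_le (hbot : Δfun β g0 g1 (t + 1) ≠ -β)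
    (hle : Δfun β g0 g1 t ≤ Δfun β g0 g1 (t + 1)) :
    1 - pRec β g0 g1 (t + 1) =
      (1 - pRec β g0 g1 t) * (Δfun β g0 g1 (t + 1) / Δfun β g0 g1 t) := by
  by_cases htop : Δfun β g0 g1 (t + 1) = 0
  · rw [pRec, if_pos htop, htop, zero_div, mul_zero, sub_self]
  · rw [pRec, if_neg htop, if_neg hbot, if_pos hle]
    ring

theorem pRec_succ_of_Δfun_lt (hβ : 0 ≤ β) (hlt : Δfun β g0 g1 (t + 1) < Δfun β g0 g1 t) :
    pRec β g0 g1 (t + 1) =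
      pRec β g0 g1 t * ((β + Δfun β g0 g1 (t + 1)) / (β + Δfun β g0 g1 t)) := by
  have htop : Δfun β g0 g1 (t + 1) ≠ 0 := (hlt.trans_le (Δfun_mem_Icc g0 g1 hβ t).2).ne
  rw [pRec, if_neg htop]
  by_cases hbot : Δfun β g0 g1 (t + 1) = -β
  · rw [if_pos hbot, hbot, add_neg_cancel, zero_div, mul_zero]
  · rw [if_neg hbot, if_neg hlt.not_ge, mul_div_assoc]

end

theorem stmt6_general {β : ℝ} (hβ : 0 < β) (g0 g1 : ℕ → ℝ) (t : ℕ) :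
    pRec β g0 g1 t = (β + Δfun β g0 g1 t) / β := by
  induction t with
  | zero => rw [pRec, Δfun, add_neg_cancel, zero_div]
  | succ t ih =>
    obtain ⟨hlower, hupper⟩ := Δfun_mem_Icc g0 g1 hβ.le (t + 1)
    by_cases hbot : Δfun β g0 g1 (t + 1) = -β
    · rw [pRec_succ_of_Δfun_eq_neg hβ.ne' hbot, hbot, add_neg_cancel, zero_div]
    rcases le_or_gt (Δfun β g0 g1 t) (Δfun β g0 g1 (t + 1)) with hle | hlt
    · -- If `Δ(t) = 0` then also `Δ(t + 1) = 0`, so the convention `x / 0 = 0` does no harm.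
      have hcancel : Δfun β g0 g1 (t + 1) / Δfun β g0 g1 t * Δfun β g0 g1 t =
          Δfun β g0 g1 (t + 1) :=
        div_mul_cancel_of_imp fun hzero => hupper.antisymm (hzero ▸ hle)
      have hcompl : 1 - pRec β g0 g1 (t + 1) = -Δfun β g0 g1 (t + 1) / β := by
        rw [one_sub_pRec_succ_of_Δfun_le hbot hle, ih, one_sub_div hβ.ne']
        linear_combination (-1 / β) * hcancel
      rw [← sub_sub_cancel 1 (pRec β g0 g1 (t + 1)), hcompl, one_sub_div hβ.ne', sub_neg_eq_add]
    · have hpos : 0 < β + Δfun β g0 g1 t := by linarith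
      rw [pRec_succ_of_Δfun_lt hβ.le hlt, ih, mul_comm, div_mul_div_cancel₀ hpos.ne']

/-- the marginal probabilities of gCHASE_s^r coincide with the
trajectory of the continuous algorithm cCHASE: `p_t = (β + Δ(t))/β` for all
`t = 0, 1, …, T`. -/
theorem stmt6 (T : ℕ) (β : ℝ) (hβ : 0 < β) (g0 g1 : ℕ → ℝ)
    (hg0 : ∀ t, 1 ≤ t → t ≤ T → 0 ≤ g0 t) (hg1 : ∀ t, 1 ≤ t → t ≤ T → 0 ≤ g1 t) :
    ∀ t, t ≤ T → pRec β g0 g1 t = (β + Δfun β g0 g1 t) / β := by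
  exact fun t _ => stmt6_general hβ g0 g1 t
end

section
/- If the cumulative cost difference ever reaches zero, the offline optimum is at least the switching cost: if β ≥ 0 and Δ(t₀) = 0 for some t₀ ∈ {1,…,T}, then Opt ≥ β. (Contrapositively, if Opt < β, then Δ(t) < 0 for all t, hence both the schedule of OFA_s and the schedule of gCHASE_s are identically 0 and both incur exactly the optimal cost.) -/
/-- The cost of a schedule `s` (with states encoded as reals): the operating
cost at time `t` is `(1 - s t) * g0 t + s t * g1 t`, which agrees with
`g_t(s_t)` for binary schedules, plus the switching cost `β·(s t − s (t−1))⁺`. -/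
noncomputable def cost (T : ℕ) (β : ℝ) (g0 g1 : ℕ → ℝ) (s : ℕ → ℝ) : ℝ :=
  ∑ t ∈ Finset.Icc 1 T, ((1 - s t) * g0 t + s t * g1 t + β * max (s t - s (t - 1)) 0)

/-- The offline optimal value `Opt` of problem SP: the infimum of costs over
all binary schedules starting in state `0`. -/
noncomputable def opt (T : ℕ) (β : ℝ) (g0 g1 : ℕ → ℝ) : ℝ :=
  sInf {c : ℝ | ∃ s : ℕ → ℝ, (∀ t, s t = 0 ∨ s t = 1) ∧ s 0 = 0 ∧ c = cost T β g0 g1 s}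

/-!
Along any schedule, the potential `(1 - s t) * Δ t` increases in each step by at most the cost of
that step: since `-β ≤ Δ ≤ 0`, the switching cost pays for any increase due to raising `s`, and the
operating cost of state `0` pays for the increase of `Δ`. As `Δ 0 = -β`, telescoping gives
`(1 - s 0) * β + (1 - s t) * Δ t ≤ cost t`, and the second summand vanishes at `t₀`.
-/

theorem sub_mul_le_mul_max_sub_zero {b d x y : ℝ} (hd : -b ≤ d) (hd' : d ≤ 0) :
    (x - y) * d ≤ b * max (y - x) 0 :=
  calc
    (x - y) * d = -d * (y - x) := by ring
    _ ≤ -d * max (y - x) 0 := mul_le_mul_of_nonneg_left (le_max_left _ _) (neg_nonneg.mpr hd')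
    _ ≤ b * max (y - x) 0 := mul_le_mul_of_nonneg_right (neg_le.mp hd) (le_max_right _ _)

/-- The cost incurred at time `t` alone, i.e. the summand of `cost`. At `t = 0` truncated
subtraction makes the switching term zero. -/
noncomputable def stageCost (β : ℝ) (g0 g1 s : ℕ → ℝ) (t : ℕ) : ℝ :=
  (1 - s t) * g0 t + s t * g1 t + β * max (s t - s (t - 1)) 0

section

variable {T : ℕ} {β : ℝ} {g0 g1 s : ℕ → ℝ} {t : ℕ}

theorem neg_le_Δfun (hβ : 0 ≤ β) : ∀ t, -β ≤ Δfun β g0 g1 t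
  | 0 => le_rfl
  | _ + 1 => le_min (neg_nonpos.mpr hβ) (le_max_left _ _)

theorem Δfun_nonpos (hβ : 0 ≤ β) : ∀ t, Δfun β g0 g1 t ≤ 0
  | 0 => neg_nonpos.mpr hβ
  | _ + 1 => min_le_left _ _

theorem Δfun_succ_le (hβ : 0 ≤ β) (hg0 : 0 ≤ g0 (t + 1)) (hg1 : 0 ≤ g1 (t + 1)) :
    Δfun β g0 g1 (t + 1) ≤ Δfun β g0 g1 t + g0 (t + 1) := by
  have hΔ : -β ≤ Δfun β g0 g1 t := neg_le_Δfun hβ t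
  exact (min_le_right _ _).trans (max_le (by linarith) (by linarith))

theorem stageCost_nonneg (hβ : 0 ≤ β) (hg0 : 0 ≤ g0 t) (hg1 : 0 ≤ g1 t)
    (hs : s t ∈ Set.Icc 0 1) : 0 ≤ stageCost β g0 g1 s t := by
  have hs' : 0 ≤ 1 - s t := sub_nonneg.mpr hs.2
  have hs0 : 0 ≤ s t := hs.1
  unfold stageCost
  positivity

theorem cost_zero : cost 0 β g0 g1 s = 0 :=
  Finset.sum_empty

theorem cost_succ :
    cost (t + 1) β g0 g1 s = cost t β g0 g1 s + stageCost β g0 g1 s (t + 1) :=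
  Finset.sum_Icc_succ_top (Nat.le_add_left 1 t) _

theorem cost_le_cost_of_le (hβ : 0 ≤ β) (hg0 : ∀ t, 1 ≤ t → t ≤ T → 0 ≤ g0 t)
    (hg1 : ∀ t, 1 ≤ t → t ≤ T → 0 ≤ g1 t) (hs : ∀ t, s t ∈ Set.Icc 0 1) (htT : t ≤ T) :
    cost t β g0 g1 s ≤ cost T β g0 g1 s := by
  refine Finset.sum_le_sum_of_subset_of_nonneg (Finset.Icc_subset_Icc_right htT) fun i hi _ ↦ ?_
  obtain ⟨h1i, hiT⟩ := Finset.mem_Icc.mp hi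
  exact stageCost_nonneg hβ (hg0 i h1i hiT) (hg1 i h1i hiT) (hs i)

theorem one_sub_mul_Δfun_succ_le (hβ : 0 ≤ β) (hg0 : 0 ≤ g0 (t + 1)) (hg1 : 0 ≤ g1 (t + 1))
    (hs : s (t + 1) ∈ Set.Icc 0 1) :
    (1 - s (t + 1)) * Δfun β g0 g1 (t + 1) ≤
      (1 - s t) * Δfun β g0 g1 t + stageCost β g0 g1 s (t + 1) := by
  have hΔ : (1 - s (t + 1)) * Δfun β g0 g1 (t + 1) ≤
      (1 - s (t + 1)) * (Δfun β g0 g1 t + g0 (t + 1)) :=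
    mul_le_mul_of_nonneg_left (Δfun_succ_le hβ hg0 hg1) (sub_nonneg.mpr hs.2)
  have hswitch : (s t - s (t + 1)) * Δfun β g0 g1 t ≤ β * max (s (t + 1) - s t) 0 :=
    sub_mul_le_mul_max_sub_zero (neg_le_Δfun hβ t) (Δfun_nonpos hβ t)
  have hoperate : 0 ≤ s (t + 1) * g1 (t + 1) := mul_nonneg hs.1 hg1
  rw [stageCost, Nat.add_sub_cancel]
  linarith

theorem one_sub_mul_add_one_sub_mul_Δfun_le_cost (hβ : 0 ≤ β)
    (hg0 : ∀ t, 1 ≤ t → t ≤ T → 0 ≤ g0 t) (hg1 : ∀ t, 1 ≤ t → t ≤ T → 0 ≤ g1 t)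
    (hs : ∀ t, s t ∈ Set.Icc 0 1) :
    (1 - s 0) * β + (1 - s T) * Δfun β g0 g1 T ≤ cost T β g0 g1 s := by
  induction T with
  | zero =>
    rw [cost_zero, Δfun]
    linarith
  | succ t ih =>
    have hprefix : (1 - s 0) * β + (1 - s t) * Δfun β g0 g1 t ≤ cost t β g0 g1 s :=
      ih (fun i h1i hit ↦ hg0 i h1i (Nat.le_succ_of_le hit))
        fun i h1i hit ↦ hg1 i h1i (Nat.le_succ_of_le hit)
    have hstep : (1 - s (t + 1)) * Δfun β g0 g1 (t + 1) ≤
        (1 - s t) * Δfun β g0 g1 t + stageCost β g0 g1 s (t + 1) :=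
      one_sub_mul_Δfun_succ_le hβ (hg0 _ (Nat.le_add_left 1 t) le_rfl)
        (hg1 _ (Nat.le_add_left 1 t) le_rfl) (hs _)
    rw [cost_succ]
    linarith

theorem le_opt {b : ℝ}
    (h : ∀ s : ℕ → ℝ, (∀ t, s t = 0 ∨ s t = 1) → s 0 = 0 → b ≤ cost T β g0 g1 s) :
    b ≤ opt T β g0 g1 := by
  refine le_csInf ⟨_, fun _ ↦ 0, fun _ ↦ Or.inl rfl, rfl, rfl⟩ ?_
  rintro _ ⟨s, hs, hs0, rfl⟩
  exact h s hs hs0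

end

theorem stmt18_general (T : ℕ) (β : ℝ) (hβ : 0 ≤ β) (g0 g1 : ℕ → ℝ)
    (hg0 : ∀ t, 1 ≤ t → t ≤ T → 0 ≤ g0 t) (hg1 : ∀ t, 1 ≤ t → t ≤ T → 0 ≤ g1 t)
    (t₀ : ℕ) (ht₀T : t₀ ≤ T) (hΔ : Δfun β g0 g1 t₀ = 0)
    (s : ℕ → ℝ) (hs : ∀ t, s t ∈ Set.Icc 0 1) :
    (1 - s 0) * β ≤ cost T β g0 g1 s :=
  calc
    (1 - s 0) * β = (1 - s 0) * β + (1 - s t₀) * Δfun β g0 g1 t₀ := by rw [hΔ, mul_zero, add_zero]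
    _ ≤ cost t₀ β g0 g1 s :=
      one_sub_mul_add_one_sub_mul_Δfun_le_cost hβ (fun t h1t ht ↦ hg0 t h1t (ht.trans ht₀T))
        (fun t h1t ht ↦ hg1 t h1t (ht.trans ht₀T)) hs
    _ ≤ cost T β g0 g1 s := cost_le_cost_of_le hβ hg0 hg1 hs ht₀T

/-- if the cumulative cost difference reaches zero at some
`t₀ ∈ {1,…,T}`, then the offline optimum is at least the switching cost:
`Opt ≥ β`. -/
theorem stmt18 (T : ℕ) (β : ℝ) (hβ : 0 ≤ β) (g0 g1 : ℕ → ℝ)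
    (hg0 : ∀ t, 1 ≤ t → t ≤ T → 0 ≤ g0 t) (hg1 : ∀ t, 1 ≤ t → t ≤ T → 0 ≤ g1 t)
    (t₀ : ℕ) (ht₀1 : 1 ≤ t₀) (ht₀T : t₀ ≤ T) (hΔ : Δfun β g0 g1 t₀ = 0) :
    β ≤ opt T β g0 g1 := by
  refine le_opt fun s hs hs0 ↦ ?_
  have hs01 (t : ℕ) : s t ∈ Set.Icc 0 1 := by rcases hs t with h | h <;> simp [h]
  simpa only [hs0, sub_zero, one_mul] using
    stmt18_general T β hβ g0 g1 hg0 hg1 t₀ ht₀T hΔ s hs01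
end
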